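/- In the recursive construction of K_i with i odd, the subspace B_i := K_{i-1}^{(1)} + … + K_{i-1}^{(n_i)} intersects A_i trivially: if a nonzero a ∈ A_i were in B_i, then the all-ones vector on some block {k}×Ω_{i-1} would lie in K_{i-1}^{(k)}, contradicting that every element of K_{i-1} has even weight while |Ω_{i-1}| = n₁⋯n_{i-1} is odd. -/

import Mathlib

/-- The iterated index set `Ω_i = {1,…,n_i} × Ω_{i-1}`, `Ω_0` a singleton.
Here `n k` plays the role of `n_{k+1}`. -/
def Om (n : ℕ → ℕ) : ℕ → Type
  | 0 => Unit
  | i + 1 => Fin (n i) × Om n i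

/-- The embedding of `V_{i-1}` into `V_i` supported on the block `{k} × Ω_{i-1}`. -/
def emb (n : ℕ → ℕ) (i : ℕ) (k : Fin (n i)) :
    (Om n i → ZMod 2) →ₗ[ZMod 2] (Om n (i + 1) → ZMod 2) where
  toFun v := fun p => if p.1 = k then v p.2 else 0
  map_add' := by
    intro x y; funext p; by_cases h : p.1 = k <;> simp [h]
  map_smul' := by
    intro m x; funext p; by_cases h : p.1 = k <;> simp [h]

/-- The subspace `A_i ≤ V_i`, spanned by the vectors `a_i^{(k,l)}`, the characteristic
vectors of `({k} ∪ {l}) × Ω_{i-1}` for `k ≠ l`. -/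
def Acode (n : ℕ → ℕ) (i : ℕ) : Submodule (ZMod 2) (Om n (i + 1) → ZMod 2) :=
  Submodule.span (ZMod 2)
    {v | ∃ k l : Fin (n i), k ≠ l ∧
      v = fun p => if p.1 = k ∨ p.1 = l then 1 else 0}

/-- The recursively defined codes `K_i = K(n_1,…,n_i)`. -/
def Kcode (n : ℕ → ℕ) : (i : ℕ) → Submodule (ZMod 2) (Om n i → ZMod 2)
  | 0 => ⊥
  | i + 1 =>
    (⨆ k : Fin (n i), (Kcode n i).map (emb n i k)) ⊔
      (if (i + 1) % 2 = 1 then Acode n i else ⊥)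

/-- The block restriction `V_i → V_{i-1}`. -/
def blockRes (n : ℕ → ℕ) (i : ℕ) (k : Fin (n i)) :
    (Om n (i + 1) → ZMod 2) →ₗ[ZMod 2] (Om n i → ZMod 2) where
  toFun v := fun x => v (k, x)
  map_add' := fun _ _ => rfl
  map_smul' := fun _ _ => rfl

/-- Weight modulo two. -/
def wtTwo (n : ℕ → ℕ) : (i : ℕ) → (Om n i → ZMod 2) →ₗ[ZMod 2] ZMod 2
  | 0 => LinearMap.proj (() : Om n 0)
  | i + 1 => ∑ k : Fin (n i), (wtTwo n i).comp (blockRes n i k)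

lemma wtTwo_succ (n : ℕ → ℕ) (i : ℕ) (v : Om n (i + 1) → ZMod 2) :
    wtTwo n (i + 1) v = ∑ k : Fin (n i), wtTwo n i (blockRes n i k v) := by
  simp [wtTwo]

lemma wtTwo_const (n : ℕ → ℕ) (hn : ∀ j, 3 ≤ n j ∧ Odd (n j)) (i : ℕ) (c : ZMod 2) :
    wtTwo n i (fun _ => c) = c := by
  induction i with
  | zero => rfl
  | succ i ih =>
    rw [wtTwo_succ]
    have h : ∀ k : Fin (n i), wtTwo n i (blockRes n i k (fun _ => c)) = c := fun k => ih
    have h2 : ((n i : ℕ) : ZMod 2) = 1 := ZMod.natCast_eq_one_iff_odd.2 (hn i).2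
    simp [h, h2]

lemma blockRes_emb (n : ℕ → ℕ) (i : ℕ) (j k : Fin (n i)) (v : Om n i → ZMod 2) :
    blockRes n i j (emb n i k v) = if j = k then v else 0 := by
  funext x
  by_cases h : j = k <;> simp [h, blockRes, emb]

lemma blockRes_mem (n : ℕ → ℕ) (i : ℕ) (K : Submodule (ZMod 2) (Om n i → ZMod 2))
    (j : Fin (n i)) :
    (⨆ k : Fin (n i), K.map (emb n i k)) ≤ K.comap (blockRes n i j) := by
  refine iSup_le fun k => ?_
  rintro _ ⟨v, hv, rfl⟩
  rw [Submodule.mem_comap, blockRes_emb]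
  split_ifs
  · exact hv
  · exact K.zero_mem

lemma Acode_even (n : ℕ → ℕ) (hn : ∀ j, 3 ≤ n j ∧ Odd (n j)) (i : ℕ) :
    Acode n i ≤ LinearMap.ker (wtTwo n (i + 1)) := by
  refine Submodule.span_le.2 ?_
  rintro _ ⟨k, l, hkl, rfl⟩
  rw [SetLike.mem_coe, LinearMap.mem_ker, wtTwo_succ]
  have h : ∀ j : Fin (n i), wtTwo n i (blockRes n i j
      (fun p => if p.1 = k ∨ p.1 = l then 1 else 0)) =
      (if j = k then 1 else 0) + (if j = l then 1 else 0) := by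
    intro j
    refine (wtTwo_const n hn i (if j = k ∨ j = l then 1 else 0)).trans ?_
    by_cases h1 : j = k
    · have h2 : j ≠ l := fun h => hkl (h1.symm.trans h)
      simp [h1, hkl]
    · simp [h1]
  rw [Finset.sum_congr rfl fun j _ => h j, Finset.sum_add_distrib]
  simp
  decide

lemma Acode_const (n : ℕ → ℕ) (i : ℕ) (v : Om n (i + 1) → ZMod 2) (hv : v ∈ Acode n i) :
    ∃ c : Fin (n i) → ZMod 2, v = fun p => c p.1 := by
  induction hv using Submodule.span_induction with
  | mem x hx =>
    obtain ⟨k, l, _, rfl⟩ := hx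
    exact ⟨fun j => if j = k ∨ j = l then 1 else 0, rfl⟩
  | zero => exact ⟨0, rfl⟩
  | add x y _ _ hx hy =>
    obtain ⟨c, rfl⟩ := hx
    obtain ⟨d, rfl⟩ := hy
    exact ⟨c + d, rfl⟩
  | smul a x _ hx =>
    obtain ⟨c, rfl⟩ := hx
    exact ⟨a • c, rfl⟩

lemma Kcode_even (n : ℕ → ℕ) (hn : ∀ j, 3 ≤ n j ∧ Odd (n j)) (i : ℕ) :
    Kcode n i ≤ LinearMap.ker (wtTwo n i) := by
  induction i with
  | zero => exact bot_le
  | succ i ih =>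
    rw [Kcode]
    refine sup_le ?_ ?_
    · intro v hv
      rw [LinearMap.mem_ker, wtTwo_succ]
      exact Finset.sum_eq_zero fun j _ => ih (blockRes_mem n i _ j hv)
    · split_ifs
      · exact Acode_even n hn i
      · exact bot_le

theorem B_inf_A_eq_bot (n : ℕ → ℕ) (hn : ∀ j, 3 ≤ n j ∧ Odd (n j)) (i : ℕ)
    (hodd : Odd (i + 1)) :
    (⨆ k : Fin (n i), (Kcode n i).map (emb n i k)) ⊓ Acode n i = ⊥ := by
  rw [eq_bot_iff]
  rintro v ⟨hB, hA⟩
  obtain ⟨c, rfl⟩ := Acode_const n i v hA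
  rw [Submodule.mem_bot]
  funext p
  have h : wtTwo n i (fun _ => c p.1) = 0 :=
    Kcode_even n hn i (blockRes_mem n i _ p.1 hB)
  rw [wtTwo_const n hn] at h
  exact h
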